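/- Let O be an order in an imaginary quadratic field and let N be a positive integer. The following are equivalent: (i) if 2 divides N, then 2 is not split in O (i.e. there is no ring isomorphism O/2O ≅ ℤ/2ℤ × ℤ/2ℤ); (ii) the ℤ/Nℤ-subalgebra of O/NO generated by the unit group (O/NO)^× is all of O/NO. -/

import Mathlib

set_option synthInstance.maxHeartbeats 1000000
set_option maxHeartbeats 1000000

open NumberField

/-- `K` is an imaginary quadratic field: a number field of degree `2` over `ℚ`
with no real embedding. -/
def IsImagQuadratic (K : Type*) [Field K] [NumberField K] : Prop :=
  Module.finrank ℚ K = 2 ∧ IsEmpty (K →+* ℝ)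

/-- `O = ℤ + f·𝓞_K` is the order of conductor `f` in the number field `K`,
viewed as a subalgebra of `K`. -/
def IsOrderOfConductor (K : Type*) [Field K] [NumberField K] (f : ℕ)
    (O : Subalgebra ℤ K) : Prop :=
  ∀ x : K, x ∈ O ↔ ∃ (a : ℤ) (y : 𝓞 K), x = (a : K) + (f : K) * (algebraMap (𝓞 K) K y)

/-- The prime `ℓ` is *split* in the ring `R`: `R/ℓR ≅ ℤ/ℓ × ℤ/ℓ` as rings. -/
def SplitsIn (R : Type*) [CommRing R] (ℓ : ℕ) : Prop :=
  Nonempty ((R ⧸ Ideal.span {(ℓ : R)}) ≃+* ZMod ℓ × ZMod ℓ)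

/-- The prime `ℓ` is *inert* in the ring `R`: `R/ℓR` is a field. -/
def InertIn (R : Type*) [CommRing R] (ℓ : ℕ) : Prop :=
  IsField (R ⧸ Ideal.span {(ℓ : R)})

/-!
All units of a ring map to `1` under every homomorphism to `𝔽₂`, so if the units generate then there
is at most one such homomorphism. Conversely, over a semilocal ring the Chinese remainder theorem
writes `x` as a sum of two units as soon as this is possible in every residue field, and it only
fails for `1` in `𝔽₂`; if at most one residue field is `𝔽₂`, then `x` or `x - 1` is
such a sum. For a ring `R` free of rank two over `ℤ`, `R/2R` has four elements, so two distinct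
homomorphisms `R → 𝔽₂` amount to an isomorphism `R/2R ≅ 𝔽₂ × 𝔽₂`.
-/

section SemilocalRing

theorem subsingleton_ringHom_zmod_two_of_closure_isUnit_eq_top {A : Type*} [Ring A]
    (h : Subring.closure {u : A | IsUnit u} = ⊤) : Subsingleton (A →+* ZMod 2) := by
  refine ⟨fun φ ψ ↦ RingHom.eq_of_eqOn_set_dense h ?_⟩
  rintro _ ⟨u, rfl⟩
  have map_eq : Units.map (φ : A →* ZMod 2) u = Units.map (ψ : A →* ZMod 2) u :=
    Subsingleton.elim _ _
  exact congrArg Units.val map_eq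

theorem exists_ne_zero_and_ne_of_forall_ringHom_eq_zero {k : Type*} [Ring k] [Nontrivial k] {x : k}
    (hx : ∀ φ : k →+* ZMod 2, φ x = 0) : ∃ u : k, u ≠ 0 ∧ u ≠ x := by
  by_contra! eq_x_of_ne_zero
  have x_eq_one : x = 1 := (eq_x_of_ne_zero 1 one_ne_zero).symm
  have card_eq_two : Nat.card k = 2 :=
    (Nat.card_eq_two_iff' 0).2 ⟨1, one_ne_zero, fun u hu ↦ (eq_x_of_ne_zero u hu).trans x_eq_one⟩
  have : Finite k := Nat.finite_of_card_ne_zero (by simp [card_eq_two])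
  have := Fintype.ofFinite k
  let e : ZMod 2 ≃+* k :=
    ZMod.ringEquivOfPrime k Nat.prime_two (by rwa [← Nat.card_eq_fintype_card])
  simpa [x_eq_one] using hx e.symm

theorem isUnit_iff_forall_maximalSpectrum_mk_ne_zero {A : Type*} [CommRing A] {x : A} :
    IsUnit x ↔ ∀ m : MaximalSpectrum A, Ideal.Quotient.mk m.asIdeal x ≠ 0 := by
  simp only [ne_eq, Ideal.Quotient.eq_zero_iff_mem]
  refine ⟨fun hx m hxm ↦ m.isMaximal.ne_top (m.asIdeal.eq_top_of_isUnit_mem hxm hx), fun h ↦ ?_⟩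
  by_contra hx
  obtain ⟨m, hm, hxm⟩ := exists_max_ideal_of_mem_nonunits hx
  exact h ⟨m, hm⟩ hxm

variable {A : Type*} [CommRing A] [Finite (MaximalSpectrum A)]

theorem exists_isUnit_and_isUnit_sub_of_forall_ringHom_eq_zero {x : A}
    (hx : ∀ φ : A →+* ZMod 2, φ x = 0) : ∃ u : A, IsUnit u ∧ IsUnit (x - u) := by
  have residue (m : MaximalSpectrum A) :
      ∃ v : A ⧸ m.asIdeal, v ≠ 0 ∧ v ≠ Ideal.Quotient.mk m.asIdeal x :=
    exists_ne_zero_and_ne_of_forall_ringHom_eq_zero fun φ ↦ hx (φ.comp (Ideal.Quotient.mk _))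
  choose v v_ne_zero v_ne_x using residue
  have coprime : Pairwise (Function.onFun IsCoprime (MaximalSpectrum.asIdeal (R := A))) :=
    fun _ _ hne ↦ Ideal.isCoprime_of_isMaximal (MaximalSpectrum.ext_iff.ne.mp hne)
  obtain ⟨u, hu⟩ := Ideal.pi_quotient_surjective coprime v
  simp only [isUnit_iff_forall_maximalSpectrum_mk_ne_zero, map_sub, sub_ne_zero]
  exact ⟨u, fun m ↦ (hu m).symm ▸ v_ne_zero m, fun m ↦ (hu m).symm ▸ (v_ne_x m).symm⟩

theorem mem_closure_isUnit_of_forall_ringHom_eq_zero {x : A}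
    (hx : ∀ φ : A →+* ZMod 2, φ x = 0) : x ∈ Subring.closure {u : A | IsUnit u} := by
  obtain ⟨u, hu, hxu⟩ := exists_isUnit_and_isUnit_sub_of_forall_ringHom_eq_zero hx
  exact sub_add_cancel x u ▸ add_mem (Subring.subset_closure hxu) (Subring.subset_closure hu)

theorem closure_isUnit_eq_top_iff_subsingleton_ringHom_zmod_two :
    Subring.closure {u : A | IsUnit u} = ⊤ ↔ Subsingleton (A →+* ZMod 2) := by
  refine ⟨subsingleton_ringHom_zmod_two_of_closure_isUnit_eq_top, fun h ↦ eq_top_iff.2 fun x _ ↦ ?_⟩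
  obtain _ | ⟨⟨φ⟩⟩ := isEmpty_or_nonempty (A →+* ZMod 2)
  · exact mem_closure_isUnit_of_forall_ringHom_eq_zero isEmptyElim
  · obtain ⟨n, hn⟩ := ZMod.intCast_surjective (φ x)
    have sub_mem : x - n ∈ Subring.closure {u : A | IsUnit u} :=
      mem_closure_isUnit_of_forall_ringHom_eq_zero fun ψ ↦ by
        rw [Subsingleton.elim ψ φ, map_sub, map_intCast, hn, sub_self]
    simpa using add_mem sub_mem (intCast_mem _ n)

end SemilocalRing

section RingHomZMod

variable {R : Type*} [CommRing R]

theorem span_natCast_le_ker {S : Type*} [Semiring S] (φ : R →+* S) {N : ℕ} (hN : (N : S) = 0) :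
    Ideal.span {(N : R)} ≤ RingHom.ker φ := by
  rwa [Ideal.span_singleton_le_iff_mem, RingHom.mem_ker, map_natCast]

theorem subsingleton_quotient_ringHom_zmod_iff (N n : ℕ) :
    Subsingleton (R ⧸ Ideal.span {(N : R)} →+* ZMod n) ↔
      (n ∣ N → Subsingleton (R →+* ZMod n)) := by
  refine ⟨fun h hnN ↦ ⟨fun φ ψ ↦ ?_⟩, fun h ↦ ⟨fun φ ψ ↦ ?_⟩⟩
  · have le_ker (χ : R →+* ZMod n) : Ideal.span {(N : R)} ≤ RingHom.ker χ :=
      span_natCast_le_ker χ ((ZMod.natCast_eq_zero_iff N n).2 hnN)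
    have lift_eq_lift := h.elim (Ideal.Quotient.lift _ φ (le_ker φ))
      (Ideal.Quotient.lift _ ψ (le_ker ψ))
    exact RingHom.ext fun x ↦ RingHom.congr_fun lift_eq_lift (Ideal.Quotient.mk _ x)
  · have hnN : n ∣ N := by
      rw [← ZMod.natCast_eq_zero_iff, ← map_natCast φ, ← map_natCast (Ideal.Quotient.mk _),
        Ideal.Quotient.mk_singleton_self, map_zero]
    have := h hnN
    exact Ideal.Quotient.ringHom_ext (Subsingleton.elim _ _)

theorem ringHom_prod_surjective_of_ne {p : ℕ} [Fact p.Prime] {φ ψ : R →+* ZMod p} (hne : φ ≠ ψ) :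
    Function.Surjective (φ.prod ψ) := by
  obtain ⟨x, hx⟩ := DFunLike.ne_iff.1 hne
  have diff_ne_zero : φ x - ψ x ≠ 0 := sub_ne_zero.2 hx
  rintro ⟨a, b⟩
  obtain ⟨c, hc⟩ := ZMod.intCast_surjective ((φ x - ψ x)⁻¹ * (a - b))
  obtain ⟨d, hd⟩ := ZMod.intCast_surjective (b - (c : ZMod p) * ψ x)
  refine ⟨c * x + d, Prod.ext ?_ ?_⟩
  · calc φ (c * x + d) = c * (φ x - ψ x) + b := by
          simp only [map_add, map_mul, map_intCast, hd]
          ring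
      _ = a := by
          rw [hc]
          field
  · simp [hd]

theorem natCard_quotient_span_natCast [Module.Free ℤ R] [Module.Finite ℤ R] (n : ℕ) :
    Nat.card (R ⧸ Ideal.span {(n : R)}) = n ^ Module.finrank ℤ R := by
  have span_eq_range :
      (Ideal.span {(n : R)}).toAddSubgroup = (nsmulAddMonoidHom (α := R) n).range := by
    ext x
    simp [Ideal.mem_span_singleton, dvd_def, eq_comm]
  rw [← AddSubgroup.index_range_nsmul, ← span_eq_range]
  rfl

theorem SplitsIn.nontrivial_ringHom_zmod {n : ℕ} [Nontrivial (ZMod n)] (h : SplitsIn R n) :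
    Nontrivial (R →+* ZMod n) := by
  obtain ⟨e⟩ := h
  let χ : R →+* ZMod n × ZMod n := e.toRingHom.comp (Ideal.Quotient.mk _)
  have χ_surjective : Function.Surjective χ := e.surjective.comp Ideal.Quotient.mk_surjective
  obtain ⟨x, hx⟩ := χ_surjective (0, 1)
  exact ⟨(RingHom.fst _ _).comp χ, (RingHom.snd _ _).comp χ, DFunLike.ne_iff.2 ⟨x, by simp [hx]⟩⟩

theorem splitsIn_iff_nontrivial_ringHom_zmod [Algebra.IsQuadraticExtension ℤ R]
    (p : ℕ) [Fact p.Prime] : SplitsIn R p ↔ Nontrivial (R →+* ZMod p) := by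
  refine ⟨SplitsIn.nontrivial_ringHom_zmod, fun ⟨φ, ψ, hne⟩ ↦ ?_⟩
  let χ : R ⧸ Ideal.span {(p : R)} →+* ZMod p × ZMod p :=
    Ideal.Quotient.lift _ (φ.prod ψ) (span_natCast_le_ker _ (by ext <;> simp))
  have χ_surjective : Function.Surjective χ :=
    Ideal.Quotient.lift_surjective_of_surjective _ _ (ringHom_prod_surjective_of_ne hne)
  have card_eq : Nat.card (R ⧸ Ideal.span {(p : R)}) = Nat.card (ZMod p × ZMod p) := by
    rw [natCard_quotient_span_natCast, Algebra.IsQuadraticExtension.finrank_eq_two,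
      Nat.card_prod, Nat.card_zmod, sq]
  have : Finite (R ⧸ Ideal.span {(p : R)}) :=
    Nat.finite_of_card_ne_zero (card_eq ▸ Nat.card_pos.ne')
  exact ⟨RingEquiv.ofBijective χ (χ_surjective.bijective_of_nat_card_le card_eq.le)⟩

end RingHomZMod

section Order

variable {K : Type*} [Field K] [NumberField K] {f : ℕ} {O : Subalgebra ℤ K}

theorem IsOrderOfConductor.le_integralClosure (hO : IsOrderOfConductor K f O) :
    O ≤ integralClosure ℤ K := by
  intro x hx
  obtain ⟨a, y, rfl⟩ := (hO x).1 hx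
  exact (a + f * y : 𝓞 K).isIntegral_coe

theorem IsOrderOfConductor.finite (hO : IsOrderOfConductor K f O) : Module.Finite ℤ O :=
  have : IsNoetherian ℤ (integralClosure ℤ K) := inferInstanceAs (IsNoetherian ℤ (𝓞 K))
  Module.Finite.of_injective (Subalgebra.inclusion hO.le_integralClosure).toLinearMap
    (Subalgebra.inclusion_injective hO.le_integralClosure)

theorem IsOrderOfConductor.finrank_eq (hO : IsOrderOfConductor K f O) (hf : f ≠ 0) :
    Module.finrank ℤ O = Module.finrank ℚ K := by
  have := hO.finite
  let inclusion : O →ₗ[ℤ] 𝓞 K := (Subalgebra.inclusion hO.le_integralClosure).toLinearMap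
  have inclusion_injective : Function.Injective inclusion :=
    Subalgebra.inclusion_injective hO.le_integralClosure
  let mulConductor : 𝓞 K →ₗ[ℤ] O :=
    (LinearMap.mulLeft ℤ (f : K) ∘ₗ (Algebra.linearMap (𝓞 K) K).restrictScalars ℤ).codRestrict
      (Subalgebra.toSubmodule O) fun y ↦ (hO _).2 ⟨0, y, by simp⟩
  have mulConductor_injective : Function.Injective mulConductor := fun y z h ↦
    RingOfIntegers.coe_injective (mul_left_cancel₀ (Nat.cast_ne_zero.2 hf) (congrArg Subtype.val h))
  rw [← RingOfIntegers.rank K]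
  exact le_antisymm (LinearMap.finrank_le_finrank_of_injective inclusion_injective)
    (LinearMap.finrank_le_finrank_of_injective mulConductor_injective)

theorem IsOrderOfConductor.isQuadraticExtension (hO : IsOrderOfConductor K f O) (hf : f ≠ 0)
    (hK : Module.finrank ℚ K = 2) : Algebra.IsQuadraticExtension ℤ O :=
  have := hO.finite
  { finrank_eq_two' := (hO.finrank_eq hf).trans hK }

end Order

theorem units_generate_iff_two_not_split_general (R : Type*) [CommRing R]
    [Algebra.IsQuadraticExtension ℤ R] (N : ℕ) (hN : 0 < N) :
    (2 ∣ N → ¬ SplitsIn R 2) ↔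
      Subring.closure {x : R ⧸ Ideal.span {(N : R)} | IsUnit x} = ⊤ := by
  have : Finite (R ⧸ Ideal.span {(N : R)}) := Nat.finite_of_card_ne_zero <| by
    rw [natCard_quotient_span_natCast]
    positivity
  rw [closure_isUnit_eq_top_iff_subsingleton_ringHom_zmod_two,
    subsingleton_quotient_ringHom_zmod_iff, splitsIn_iff_nontrivial_ringHom_zmod,
    not_nontrivial_iff_subsingleton]

/-- For an order `O` in an imaginary quadratic field and a positive integer
`N`: `2` is not split in `O` whenever `2 ∣ N`, if and only if the `ℤ/N`-subalgebra of `O/NO`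
generated by its unit group (equivalently, the subring generated by the units) is all of
`O/NO`. -/
theorem units_generate_iff_two_not_split (K : Type*) [Field K] [NumberField K]
    (hK : IsImagQuadratic K) (f : ℕ) (hf : 0 < f)
    (O : Subalgebra ℤ K) (hO : IsOrderOfConductor K f O) (N : ℕ) (hN : 0 < N) :
    (2 ∣ N → ¬ SplitsIn (↥O) 2) ↔
      Subring.closure {x : ↥O ⧸ Ideal.span {(N : ↥O)} | IsUnit x} = ⊤ := by
  have := hO.isQuadraticExtension hf.ne' hK.1
  exact units_generate_iff_two_not_split_general O N hN
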